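/- Let N ≥ 1 be an integer, p ∈ (0,1), and d ≥ 0 an integer such that P_d(x) := K_d(x−N−1;p,−N−2) ≠ 0 for every integer x ∈ {−1,0,…,N+1}. Then for all integers n, m ∈ {0,1,…,N}: Σ_{x=−1}^{N} [w(x+1;p,N+1)/(P_d(x)·P_d(x+1))] · K̂_n^{(2,d)}(x;p,N) · K̂_m^{(2,d)}(x;p,N) = δ_{n,m} · (N+1)·h_n/(N+d+1−n), where w(x;p,M) = M!/(x!(M−x)!)·p^x·(1−p)^{M−x} and h_n = (−1)^n·(−N)_n·n!·p^n·(1−p)^n. -/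

import Mathlib

open Polynomial

/-- Pochhammer symbol `(c)_k = c (c+1) ⋯ (c+k−1)`. -/
noncomputable def poch (c : ℝ) (k : ℕ) : ℝ := ∏ i ∈ Finset.range k, (c + i)

/-- The monic Krawtchouk polynomial
`K_n(x;p,a) = Σ_{j=0}^{n} ((−n)_j (−a+j)_{n−j} / j!) p^{n−j} (−x)_j`,
where `(−x)_j = Π_{i=0}^{j−1} (i − x)` as a polynomial in `x`. -/
noncomputable def kraw (n : ℕ) (p a : ℝ) : Polynomial ℝ :=
  ∑ j ∈ Finset.range (n + 1),
    Polynomial.C (poch (-(n : ℝ)) j * poch (-a + j) (n - j) / (Nat.factorial j) * p ^ (n - j)) *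
      ∏ i ∈ Finset.range j, (Polynomial.C (i : ℝ) - Polynomial.X)

/-- The type-2 exceptional Krawtchouk polynomial
`K̂_n^{(2,d)}(x;p,M) = [(M−x) K_d(x−M−1;p,−M−2) K_n(x+1;p,M)
  + (x+1) K_d(x−M;p,−M−2) K_n(x;p,M)]/(M+d+1−n)`. -/
noncomputable def xkraw2 (d n : ℕ) (p M : ℝ) : Polynomial ℝ :=
  Polynomial.C (1 / (M + (d : ℝ) + 1 - (n : ℝ))) *
    ((Polynomial.C M - Polynomial.X) *
        (kraw d p (-M - 2)).comp (Polynomial.X - Polynomial.C (M + 1)) *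
        (kraw n p M).comp (Polynomial.X + 1) +
      (Polynomial.X + 1) * (kraw d p (-M - 2)).comp (Polynomial.X - Polynomial.C M) *
        kraw n p M)

/-!
With `φ(x) = K_d(x−N−1;p,−N−2)`, the first-order difference operator
`T f(x) = (N−x) φ(x) f(x+1) + (x+1) φ(x+1) f(x)` sends `K_n` to `(N+d+1−n) K̂_n`. Its adjoint, from
the weight `w(x+1;p,N+1)/(φ(x) φ(x+1))` to the binomial weight `w(x;p,N)`, is `N + 1` times
`S g(x) = ((1−p) g(x−1) + p g(x))/φ(x)`. Since `φ` solves a Krawtchouk difference equation, `S T`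
is the Krawtchouk operator plus a constant, so `S T K_n = (N+d+1−n) K_n`, and the orthogonality of
the `K̂_n` reduces to that of the `K_n`. The latter follows by induction on `N`: summation by parts
turns `⟨K_n, K_m⟩` into a multiple of `⟨ΔK_n, ΔK_m⟩`, and the forward difference `Δ` maps
`K_n(·;p,N)` to `n K_{n−1}(·;p,N−1)`.
-/

lemma poch_zero (c : ℝ) : poch c 0 = 1 := Finset.prod_range_zero _

lemma poch_succ (c : ℝ) (k : ℕ) : poch c (k + 1) = poch c k * (c + k) :=
  Finset.prod_range_succ _ _

lemma poch_succ' (c : ℝ) (k : ℕ) : poch c (k + 1) = c * poch (c + 1) k := by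
  simp only [poch, Finset.prod_range_succ', Nat.cast_zero, add_zero, Nat.cast_add, Nat.cast_one,
    mul_comm c, add_assoc, add_comm (1 : ℝ)]

lemma poch_zero_left_succ (k : ℕ) : poch 0 (k + 1) = 0 := by
  rw [poch_succ', zero_mul]

lemma neg_mul_poch_one_sub (x : ℝ) (j : ℕ) : -x * poch (1 - x) j = (j - x) * poch (-x) j := by
  rw [sub_eq_neg_add, ← poch_succ', poch_succ]
  ring

/-- The coefficient of `(−x)_j` in the Krawtchouk polynomial `K_n(x;p,a)`, for `j ≤ n`. -/
noncomputable def krawCoeff (n : ℕ) (p a : ℝ) (j : ℕ) : ℝ :=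
  poch (-(n : ℝ)) j * poch (-a + j) (n - j) / (Nat.factorial j) * p ^ (n - j)

lemma eval_kraw (n : ℕ) (p a x : ℝ) :
    (kraw n p a).eval x = ∑ j ∈ Finset.range (n + 1), krawCoeff n p a j * poch (-x) j := by
  simp [kraw, krawCoeff, poch, Polynomial.eval_finsetSum, Polynomial.eval_prod, neg_add_eq_sub]

lemma krawCoeff_zero_right (n : ℕ) (p a : ℝ) : krawCoeff n p a 0 = poch (-a) n * p ^ n := by
  simp [krawCoeff, poch_zero]

lemma krawCoeff_succ_succ (n : ℕ) (p a : ℝ) (j : ℕ) :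
    -(j + 1) * krawCoeff (n + 1) p a (j + 1) = (n + 1) * krawCoeff n p (a - 1) j := by
  have hn : -((n + 1 : ℕ) : ℝ) + 1 = -n := by push_cast; ring
  have ha : -a + ((j + 1 : ℕ) : ℝ) = -(a - 1) + j := by push_cast; ring
  rw [krawCoeff, krawCoeff, poch_succ', hn, ha, Nat.factorial_succ, Nat.add_sub_add_right]
  push_cast
  field_simp

lemma krawCoeff_succ_right {n j : ℕ} (hj : j < n) (p a : ℝ) :
    (j + 1) * p * (a - j) * krawCoeff n p a (j + 1) = (n - j) * krawCoeff n p a j := by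
  obtain ⟨k, rfl⟩ : ∃ k, n = j + 1 + k := Nat.exists_eq_add_of_le hj
  have ha : -a + ((j + 1 : ℕ) : ℝ) = -a + j + 1 := by push_cast; ring
  rw [krawCoeff, krawCoeff, Nat.add_sub_cancel_left, show j + 1 + k - j = k + 1 by lia, poch_succ,
    poch_succ' (-a + j), ha, Nat.factorial_succ]
  push_cast
  field_simp
  ring

lemma kraw_zero (p a : ℝ) : kraw 0 p a = 1 := by
  simp [kraw, poch_zero]

lemma eval_zero_kraw (n : ℕ) (p a : ℝ) : (kraw n p a).eval 0 = poch (-a) n * p ^ n := by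
  simp [eval_kraw, Finset.sum_range_succ', poch_zero_left_succ, poch_zero, krawCoeff_zero_right]

lemma eval_add_one_sub_eval_kraw_succ (n : ℕ) (p a x : ℝ) :
    (kraw (n + 1) p a).eval (x + 1) - (kraw (n + 1) p a).eval x =
      (n + 1) * (kraw n p (a - 1)).eval x := by
  simp only [eval_kraw]
  rw [← Finset.sum_sub_distrib, Finset.sum_range_succ', Finset.mul_sum]
  simp only [poch_zero, sub_self, add_zero]
  refine Finset.sum_congr rfl fun j _ ↦ ?_
  rw [poch_succ' (-(x + 1)), show -(x + 1) + 1 = -x by ring, poch_succ (-x)]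
  linear_combination poch (-x) j * krawCoeff_succ_succ n p a j

/-- The second-order difference operator having the Krawtchouk polynomials `K_n(x;p,a)` as
eigenfunctions. -/
def krawOp (p a : ℝ) : (ℝ → ℝ) →ₗ[ℝ] ℝ → ℝ where
  toFun f x := p * (a - x) * (f (x + 1) - f x) + (1 - p) * x * (f (x - 1) - f x)
  map_add' f g := by ext x; simp only [Pi.add_apply]; ring
  map_smul' c f := by ext x; simp only [Pi.smul_apply, smul_eq_mul, RingHom.id_apply]; ring

lemma krawOp_apply (p a : ℝ) (f : ℝ → ℝ) (x : ℝ) :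
    krawOp p a f x = p * (a - x) * (f (x + 1) - f x) + (1 - p) * x * (f (x - 1) - f x) := rfl

lemma krawOp_poch_zero (p a x : ℝ) : krawOp p a (fun y ↦ poch (-y) 0) x = 0 := by
  simp [krawOp_apply, poch_zero]

lemma krawOp_poch_succ (p a x : ℝ) (j : ℕ) :
    krawOp p a (fun y ↦ poch (-y) (j + 1)) x =
      -(j + 1) * poch (-x) (j + 1) - (j + 1) * p * (a - j) * poch (-x) j := by
  have hup : poch (-(x + 1)) (j + 1) = -(x + 1) * poch (-x) j := by
    rw [poch_succ', show -(x + 1) + 1 = -x by ring]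
  have hdown := neg_mul_poch_one_sub x (j + 1)
  rw [krawOp_apply, hup, show -(x - 1) = 1 - x by ring]
  push_cast at hdown
  linear_combination (-(1 - p)) * hdown + ((j + 1) * p - p * (a - x)) * poch_succ (-x) j

theorem krawOp_kraw (n : ℕ) (p a x : ℝ) :
    krawOp p a (fun y ↦ (kraw n p a).eval y) x = -n * (kraw n p a).eval x := by
  have hexpand : (fun y ↦ (kraw n p a).eval y) =
      ∑ j ∈ Finset.range (n + 1), krawCoeff n p a j • fun y ↦ poch (-y) j := by
    ext y
    simp only [eval_kraw, Finset.sum_apply, Pi.smul_apply, smul_eq_mul]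
  have hdiag : ∑ j ∈ Finset.range n, (j + 1) * (krawCoeff n p a (j + 1) * poch (-x) (j + 1)) =
      ∑ j ∈ Finset.range (n + 1), j * (krawCoeff n p a j * poch (-x) j) := by
    simp [Finset.sum_range_succ']
  have hsub : ∑ j ∈ Finset.range n, (n - j) * (krawCoeff n p a j * poch (-x) j) =
      ∑ j ∈ Finset.range (n + 1), (n - j) * (krawCoeff n p a j * poch (-x) j) := by
    simp [Finset.sum_range_succ]
  calc krawOp p a (fun y ↦ (kraw n p a).eval y) x
    _ = ∑ j ∈ Finset.range n,
          krawCoeff n p a (j + 1) * krawOp p a (fun y ↦ poch (-y) (j + 1)) x := by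
      simp only [hexpand, map_sum, map_smul, Finset.sum_apply, Pi.smul_apply, smul_eq_mul]
      rw [Finset.sum_range_succ', krawOp_poch_zero, mul_zero, add_zero]
    _ = -∑ j ∈ Finset.range n, (j + 1) * (krawCoeff n p a (j + 1) * poch (-x) (j + 1)) -
          ∑ j ∈ Finset.range n, (n - j) * (krawCoeff n p a j * poch (-x) j) := by
      rw [← Finset.sum_neg_distrib, ← Finset.sum_sub_distrib]
      refine Finset.sum_congr rfl fun j hj ↦ ?_
      rw [krawOp_poch_succ]
      linear_combination (-poch (-x) j) * krawCoeff_succ_right (Finset.mem_range.1 hj) p a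
    _ = -n * (kraw n p a).eval x := by
      rw [hdiag, hsub, eval_kraw, Finset.mul_sum, ← Finset.sum_neg_distrib,
        ← Finset.sum_sub_distrib]
      exact Finset.sum_congr rfl fun j _ ↦ by ring

/-- The binomial weight `w(k;p,N)`, as a signed weight for arbitrary real `p`. -/
def binomialWeight (N : ℕ) (p : ℝ) (k : ℕ) : ℝ := N.choose k * p ^ k * (1 - p) ^ (N - k)

lemma sub_mul_binomialWeight_succ {N k : ℕ} (hk : k ≤ N) (p : ℝ) :
    ((N : ℝ) + 1 - k) * binomialWeight (N + 1) p k =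
      (N + 1) * (1 - p) * binomialWeight N p k := by
  have hchoose : (N.choose k : ℝ) * (N + 1) = (N + 1).choose k * ((N : ℝ) + 1 - k) := by
    have := Nat.choose_mul_succ_eq N k
    zify [hk.trans N.le_succ] at this
    exact_mod_cast this
  rw [binomialWeight, binomialWeight, Nat.succ_sub hk, pow_succ]
  linear_combination (-(p ^ k * (1 - p) ^ (N - k) * (1 - p))) * hchoose

lemma succ_mul_binomialWeight_succ (N : ℕ) (p : ℝ) (k : ℕ) :
    ((k : ℝ) + 1) * binomialWeight (N + 1) p (k + 1) = (N + 1) * p * binomialWeight N p k := by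
  have hchoose : ((N : ℝ) + 1) * N.choose k = (N + 1).choose (k + 1) * (k + 1) := by
    exact_mod_cast Nat.add_one_mul_choose_eq N k
  rw [binomialWeight, binomialWeight, Nat.add_sub_add_right, pow_succ]
  linear_combination (-(p ^ k * p * (1 - p) ^ (N - k))) * hchoose

/-- The sum of a function over `0, …, N` against the binomial weight: its expectation under the
binomial distribution when `0 ≤ p ≤ 1`. -/
def binomialSum (N : ℕ) (p : ℝ) (f : ℝ → ℝ) : ℝ :=
  ∑ k ∈ Finset.range (N + 1), binomialWeight N p k * f k

lemma binomialSum_congr {N : ℕ} {f g : ℝ → ℝ} (h : ∀ k : ℕ, k ≤ N → f k = g k) (p : ℝ) :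
    binomialSum N p f = binomialSum N p g :=
  Finset.sum_congr rfl fun k hk ↦ by rw [h k (Finset.mem_range_succ_iff.1 hk)]

lemma binomialSum_const_mul (N : ℕ) (p c : ℝ) (f : ℝ → ℝ) :
    binomialSum N p (fun x ↦ c * f x) = c * binomialSum N p f := by
  simp only [binomialSum, Finset.mul_sum, mul_left_comm]

lemma binomialSum_one (N : ℕ) (p : ℝ) : binomialSum N p (fun _ ↦ 1) = 1 := by
  calc binomialSum N p (fun _ ↦ 1) = (p + (1 - p)) ^ N := by
        rw [add_pow]
        exact Finset.sum_congr rfl fun k _ ↦ by rw [binomialWeight]; ring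
    _ = 1 := by rw [add_sub_cancel, one_pow]

lemma binomialSum_zero_left (p : ℝ) (f : ℝ → ℝ) : binomialSum 0 p f = f 0 := by
  simp [binomialSum, binomialWeight]

theorem binomialSum_succ (N : ℕ) (p : ℝ) (f g : ℝ → ℝ) :
    binomialSum (N + 1) p (fun x ↦ (N + 1 - x) * f x + x * g x) =
      (N + 1) * binomialSum N p (fun x ↦ (1 - p) * f x + p * g (x + 1)) := by
  have hf : ∑ k ∈ Finset.range (N + 2), binomialWeight (N + 1) p k * ((N + 1 - k) * f k) =
      ∑ k ∈ Finset.range (N + 1), (N + 1) * (1 - p) * binomialWeight N p k * f k := by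
    rw [Finset.sum_range_succ]
    push_cast
    rw [sub_self, zero_mul, mul_zero, add_zero]
    refine Finset.sum_congr rfl fun k hk ↦ ?_
    rw [← sub_mul_binomialWeight_succ (Finset.mem_range_succ_iff.1 hk)]
    ring
  have hg : ∑ k ∈ Finset.range (N + 2), binomialWeight (N + 1) p k * (k * g k) =
      ∑ k ∈ Finset.range (N + 1), (N + 1) * p * binomialWeight N p k * g (k + 1) := by
    rw [Finset.sum_range_succ', Nat.cast_zero, zero_mul, mul_zero, add_zero]
    refine Finset.sum_congr rfl fun k _ ↦ ?_
    rw [← succ_mul_binomialWeight_succ]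
    push_cast
    ring
  simp only [binomialSum, mul_add, Finset.sum_add_distrib] at hf hg ⊢
  rw [hf, hg, Finset.mul_sum, Finset.mul_sum]
  congr 1 <;> exact Finset.sum_congr rfl fun k _ ↦ by ring

theorem binomialSum_mul_krawOp (N : ℕ) (p : ℝ) (f g : ℝ → ℝ) :
    binomialSum (N + 1) p (fun x ↦ f x * krawOp p (N + 1) g x) =
      -(p * (1 - p) * (N + 1)) *
        binomialSum N p (fun x ↦ (f (x + 1) - f x) * (g (x + 1) - g x)) := by
  calc binomialSum (N + 1) p (fun x ↦ f x * krawOp p (N + 1) g x)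
    _ = binomialSum (N + 1) p (fun x ↦ (N + 1 - x) * (p * f x * (g (x + 1) - g x)) +
          x * ((1 - p) * f x * (g (x - 1) - g x))) :=
      binomialSum_congr (fun k _ ↦ by rw [krawOp_apply]; ring) p
    _ = (N + 1) * binomialSum N p (fun x ↦
          -(p * (1 - p)) * ((f (x + 1) - f x) * (g (x + 1) - g x))) := by
      rw [binomialSum_succ]
      congr 1
      exact binomialSum_congr (fun k _ ↦ by rw [add_sub_cancel_right]; ring) p
    _ = _ := by rw [binomialSum_const_mul]; ring

lemma mul_binomialSum_kraw_mul_kraw (N : ℕ) (p : ℝ) (n m : ℕ) :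
    m * binomialSum (N + 1) p
        (fun x ↦ (kraw n p (N + 1)).eval x * (kraw m p (N + 1)).eval x) =
      p * (1 - p) * (N + 1) * binomialSum N p (fun x ↦
        ((kraw n p (N + 1)).eval (x + 1) - (kraw n p (N + 1)).eval x) *
          ((kraw m p (N + 1)).eval (x + 1) - (kraw m p (N + 1)).eval x)) := by
  have hparts := binomialSum_mul_krawOp N p (fun x ↦ (kraw n p (N + 1)).eval x)
    (fun x ↦ (kraw m p (N + 1)).eval x)
  simp only [krawOp_kraw, mul_left_comm _ (-(m : ℝ)), binomialSum_const_mul] at hparts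
  linear_combination -hparts

lemma binomialSum_kraw_succ_eq_zero (N : ℕ) (p : ℝ) (m : ℕ) :
    binomialSum (N + 1) p (fun x ↦ (kraw (m + 1) p (N + 1)).eval x) = 0 := by
  have hparts := mul_binomialSum_kraw_mul_kraw N p 0 (m + 1)
  simp only [kraw_zero, Polynomial.eval_one, one_mul, sub_self, zero_mul, binomialSum, mul_zero,
    Finset.sum_const_zero] at hparts
  exact (mul_eq_zero.1 hparts).resolve_left (Nat.cast_ne_zero.2 m.succ_ne_zero)

lemma binomialSum_kraw_succ_mul_kraw_succ (N : ℕ) (p : ℝ) (n m : ℕ) :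
    binomialSum (N + 1) p
        (fun x ↦ (kraw (n + 1) p (N + 1)).eval x * (kraw (m + 1) p (N + 1)).eval x) =
      p * (1 - p) * (N + 1) * (n + 1) *
        binomialSum N p (fun x ↦ (kraw n p N).eval x * (kraw m p N).eval x) := by
  have hparts := mul_binomialSum_kraw_mul_kraw N p (n + 1) (m + 1)
  simp only [eval_add_one_sub_eval_kraw_succ, add_sub_cancel_right, mul_mul_mul_comm,
    binomialSum_const_mul] at hparts
  refine mul_left_cancel₀ (Nat.cast_ne_zero.2 m.succ_ne_zero) (hparts.trans ?_)
  push_cast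
  ring

theorem binomialSum_kraw_mul_kraw (N : ℕ) (p : ℝ) (n m : ℕ) :
    binomialSum N p (fun x ↦ (kraw n p N).eval x * (kraw m p N).eval x) =
      (if n = m then 1 else 0) *
        ((-1) ^ n * poch (-(N : ℝ)) n * n.factorial * p ^ n * (1 - p) ^ n) := by
  induction N generalizing n m with
  | zero =>
    cases n <;> cases m <;>
      simp [binomialSum_zero_left, eval_zero_kraw, poch_zero, poch_zero_left_succ]
  | succ N ih =>
    push_cast
    rcases n with _ | n <;> rcases m with _ | m
    · simp [kraw_zero, binomialSum_one, poch_zero]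
    · simp [kraw_zero, binomialSum_kraw_succ_eq_zero]
    · simp [kraw_zero, binomialSum_kraw_succ_eq_zero]
    · have hpoch : poch (-((N : ℝ) + 1)) (n + 1) = -(N + 1) * poch (-(N : ℝ)) n := by
        rw [poch_succ', show -((N : ℝ) + 1) + 1 = -N by ring]
      rw [binomialSum_kraw_succ_mul_kraw_succ, ih, hpoch, Nat.factorial_succ]
      simp only [Nat.add_right_cancel_iff]
      push_cast
      ring

/-- The Darboux transform `f ↦ (M − x) φ(x) f(x+1) + (x+1) φ(x+1) f(x)` with seed function `φ`,
which maps Krawtchouk polynomials to multiples of the type-2 exceptional ones. -/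
def darbouxTransform (M : ℝ) (φ f : ℝ → ℝ) (x : ℝ) : ℝ :=
  (M - x) * φ x * f (x + 1) + (x + 1) * φ (x + 1) * f x

/-- The backward transform `g ↦ ((1−p) g(x−1) + p g(x))/φ(x)`: up to the factor `N + 1`, the adjoint
of `darbouxTransform N φ` from the weight `w(x+1;p,N+1)/(φ(x) φ(x+1))` to `w(x;p,N)`. -/
noncomputable def darbouxAdjoint (p : ℝ) (φ g : ℝ → ℝ) (x : ℝ) : ℝ :=
  ((1 - p) * g (x - 1) + p * g x) / φ x

theorem binomialSum_darbouxTransform_mul_div {N : ℕ} {φ : ℝ → ℝ}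
    (hφ : ∀ x : ℤ, -1 ≤ x → x ≤ (N : ℤ) + 1 → φ x ≠ 0) (p : ℝ) (f g : ℝ → ℝ) :
    binomialSum (N + 1) p
        (fun x ↦ darbouxTransform N φ f (x - 1) * g (x - 1) / (φ (x - 1) * φ x)) =
      (N + 1) * binomialSum N p (fun x ↦ f x * darbouxAdjoint p φ g x) := by
  calc binomialSum (N + 1) p
        (fun x ↦ darbouxTransform N φ f (x - 1) * g (x - 1) / (φ (x - 1) * φ x))
    _ = binomialSum (N + 1) p (fun x ↦ (N + 1 - x) * (f x * g (x - 1) / φ x) +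
          x * (f (x - 1) * g (x - 1) / φ (x - 1))) := by
      refine binomialSum_congr (fun k hk ↦ ?_) p
      have hk₀ : φ k ≠ 0 := by exact_mod_cast hφ k (by lia) (by lia)
      have hk₁ : φ (k - 1) ≠ 0 := by exact_mod_cast hφ (k - 1) (by lia) (by lia)
      rw [darbouxTransform, sub_add_cancel]
      field_simp
      ring
    _ = (N + 1) * binomialSum N p (fun x ↦ f x * darbouxAdjoint p φ g x) := by
      rw [binomialSum_succ]
      congr 1
      exact binomialSum_congr (fun k _ ↦ by rw [darbouxAdjoint, add_sub_cancel_right]; ring) p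

theorem mul_darbouxAdjoint_darbouxTransform {M x : ℝ} {ψ : ℝ → ℝ} (hψ : ψ (x - (M + 1)) ≠ 0)
    (p : ℝ) (f : ℝ → ℝ) :
    ψ (x - (M + 1)) * darbouxAdjoint p (fun y ↦ ψ (y - (M + 1)))
        (darbouxTransform M (fun y ↦ ψ (y - (M + 1))) f) x =
      ψ (x - (M + 1)) * (krawOp p M f x + (M + 1) * f x) -
        f x * krawOp p (-M - 2) ψ (x - (M + 1)) := by
  rw [darbouxAdjoint, mul_div_cancel₀ _ hψ, darbouxTransform, darbouxTransform, krawOp_apply,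
    krawOp_apply, sub_add_cancel, sub_right_comm x 1, sub_add_eq_add_sub x]
  ring

/-- The denominator polynomial `P_d(x) = K_d(x−M−1;p,−M−2)` of the exceptional weight, as a
function. -/
noncomputable def exceptionalSeed (d : ℕ) (p M x : ℝ) : ℝ :=
  (kraw d p (-M - 2)).eval (x - (M + 1))

theorem darbouxAdjoint_darbouxTransform_kraw {d : ℕ} {p M x : ℝ}
    (hx : exceptionalSeed d p M x ≠ 0) (n : ℕ) :
    darbouxAdjoint p (exceptionalSeed d p M)
        (darbouxTransform M (exceptionalSeed d p M) fun y ↦ (kraw n p M).eval y) x =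
      (M + d + 1 - n) * (kraw n p M).eval x := by
  have hfactor := mul_darbouxAdjoint_darbouxTransform
    (ψ := fun y ↦ (kraw d p (-M - 2)).eval y) hx p fun y ↦ (kraw n p M).eval y
  rw [krawOp_kraw, krawOp_kraw] at hfactor
  refine mul_left_cancel₀ hx (hfactor.trans ?_)
  rw [exceptionalSeed]
  ring

lemma darbouxTransform_kraw_eq_mul_eval_xkraw2 {d n : ℕ} {M : ℝ} (h : M + d + 1 - n ≠ 0)
    (p x : ℝ) :
    darbouxTransform M (exceptionalSeed d p M) (fun y ↦ (kraw n p M).eval y) x =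
      (M + d + 1 - n) * (xkraw2 d n p M).eval x := by
  have hx : x + 1 - (M + 1) = x - M := by ring
  simp [xkraw2, darbouxTransform, exceptionalSeed, hx, mul_inv_cancel_left₀ h]

theorem binomialSum_xkraw2_mul_xkraw2 {N d n m : ℕ} {p : ℝ}
    (hφ : ∀ x : ℤ, -1 ≤ x → x ≤ (N : ℤ) + 1 → exceptionalSeed d p N x ≠ 0)
    (hn : n ≠ N + d + 1) (hm : m ≠ N + d + 1) :
    binomialSum (N + 1) p (fun x ↦ (xkraw2 d n p N).eval (x - 1) *
        (xkraw2 d m p N).eval (x - 1) / (exceptionalSeed d p N (x - 1) * exceptionalSeed d p N x)) =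
      (N + 1) / (N + d + 1 - n) *
        binomialSum N p (fun x ↦ (kraw n p N).eval x * (kraw m p N).eval x) := by
  have hcn : (N : ℝ) + d + 1 - n ≠ 0 := sub_ne_zero.2 (by exact_mod_cast hn.symm)
  have hcm : (N : ℝ) + d + 1 - m ≠ 0 := sub_ne_zero.2 (by exact_mod_cast hm.symm)
  have hadj := binomialSum_darbouxTransform_mul_div hφ p (fun x ↦ (kraw n p N).eval x)
    (darbouxTransform N (exceptionalSeed d p N) fun x ↦ (kraw m p N).eval x)
  have heigen : binomialSum N p (fun x ↦ (kraw n p N).eval x *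
        darbouxAdjoint p (exceptionalSeed d p N)
          (darbouxTransform N (exceptionalSeed d p N) fun y ↦ (kraw m p N).eval y) x) =
      (N + d + 1 - m) *
        binomialSum N p (fun x ↦ (kraw n p N).eval x * (kraw m p N).eval x) := by
    rw [← binomialSum_const_mul]
    refine binomialSum_congr (fun k hk ↦ ?_) p
    rw [darbouxAdjoint_darbouxTransform_kraw (by exact_mod_cast hφ k (by lia) (by lia)),
      mul_left_comm]
  rw [heigen] at hadj
  simp only [darbouxTransform_kraw_eq_mul_eval_xkraw2 hcn,
    darbouxTransform_kraw_eq_mul_eval_xkraw2 hcm, mul_mul_mul_comm, mul_div_assoc,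
    binomialSum_const_mul] at hadj ⊢
  rw [div_mul_eq_mul_div, eq_div_iff hcn]
  refine mul_left_cancel₀ hcm ?_
  linear_combination hadj

lemma sum_Icc_neg_one_eq_binomialSum (N : ℕ) (p : ℝ) (f : ℝ → ℝ) :
    ∑ x ∈ Finset.Icc (-1 : ℤ) N, (N + 1).choose (x + 1).toNat * p ^ (x + 1).toNat *
        (1 - p) ^ ((N : ℤ) - x).toNat * f x =
      binomialSum (N + 1) p (fun x ↦ f (x - 1)) := by
  symm
  refine Finset.sum_bij (fun (k : ℕ) _ ↦ (k : ℤ) - 1) (fun k hk ↦ ?_) (fun a _ b _ h ↦ by lia)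
    (fun x hx ↦ ?_) (fun k _ ↦ ?_)
  · rw [Finset.mem_range] at hk
    rw [Finset.mem_Icc]
    lia
  · rw [Finset.mem_Icc] at hx
    exact ⟨(x + 1).toNat, Finset.mem_range.2 (by lia), by lia⟩
  · have htoNat : ((N : ℤ) - (k - 1)).toNat = N + 1 - k := by lia
    rw [binomialWeight, sub_add_cancel, Int.toNat_natCast, htoNat]
    push_cast
    rfl

theorem krawtchouk_exceptional2_orthogonality_general (N : ℕ) (p : ℝ) (d : ℕ)
    (hPd : ∀ x : ℤ, -1 ≤ x → x ≤ (N : ℤ) + 1 →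
      Polynomial.eval ((x : ℝ) - N - 1) (kraw d p (-(N : ℝ) - 2)) ≠ 0)
    (n m : ℕ) (hn : n ≠ N + d + 1) (hm : m ≠ N + d + 1) :
    ∑ x ∈ Finset.Icc (-1 : ℤ) (N : ℤ),
        (((N + 1).choose (x + 1).toNat : ℝ) * p ^ (x + 1).toNat *
              (1 - p) ^ ((N : ℤ) - x).toNat /
            (Polynomial.eval ((x : ℝ) - N - 1) (kraw d p (-(N : ℝ) - 2)) *
              Polynomial.eval ((x : ℝ) - N) (kraw d p (-(N : ℝ) - 2)))) *
          Polynomial.eval (x : ℝ) (xkraw2 d n p (N : ℝ)) *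
          Polynomial.eval (x : ℝ) (xkraw2 d m p (N : ℝ)) =
      (if n = m then 1 else 0) * ((N : ℝ) + 1) *
        ((-1 : ℝ) ^ n * poch (-(N : ℝ)) n * (n.factorial : ℝ) * p ^ n * (1 - p) ^ n) /
        ((N : ℝ) + (d : ℝ) + 1 - (n : ℝ)) := by
  have hseed (x : ℝ) : (kraw d p (-(N : ℝ) - 2)).eval (x - N - 1) = exceptionalSeed d p N x := by
    rw [exceptionalSeed, sub_sub]
  have hseed' (x : ℝ) : (kraw d p (-(N : ℝ) - 2)).eval (x - N) = exceptionalSeed d p N (x + 1) := by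
    rw [exceptionalSeed, add_sub_add_right_eq_sub]
  simp only [hseed, hseed'] at hPd ⊢
  have horth := binomialSum_xkraw2_mul_xkraw2 hPd hn hm
  rw [binomialSum_kraw_mul_kraw] at horth
  have hsum := sum_Icc_neg_one_eq_binomialSum N p fun x ↦ (xkraw2 d n p N).eval x *
    (xkraw2 d m p N).eval x / (exceptionalSeed d p N x * exceptionalSeed d p N (x + 1))
  simp only [sub_add_cancel, horth] at hsum
  refine Eq.trans (Finset.sum_congr rfl fun x _ ↦ ?_) (hsum.trans ?_) <;> ring

/-- The discrete orthogonality relation for the type-2 exceptional Krawtchouk polynomials: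
`Σ_{x=−1}^{N} [w(x+1;p,N+1)/(P_d(x) P_d(x+1))] K̂_n^{(2,d)}(x) K̂_m^{(2,d)}(x)
  = δ_{n,m} (N+1) h_n/(N+d+1−n)` with `P_d(x) = K_d(x−N−1;p,−N−2)`. -/
theorem krawtchouk_exceptional2_orthogonality (N : ℕ) (hN : 1 ≤ N) (p : ℝ)
    (hp0 : 0 < p) (hp1 : p < 1) (d : ℕ)
    (hPd : ∀ x : ℤ, -1 ≤ x → x ≤ (N : ℤ) + 1 →
      Polynomial.eval ((x : ℝ) - N - 1) (kraw d p (-(N : ℝ) - 2)) ≠ 0)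
    (n m : ℕ) (hnN : n ≤ N) (hmN : m ≤ N) :
    ∑ x ∈ Finset.Icc (-1 : ℤ) (N : ℤ),
        (((N + 1).choose (x + 1).toNat : ℝ) * p ^ (x + 1).toNat *
              (1 - p) ^ ((N : ℤ) - x).toNat /
            (Polynomial.eval ((x : ℝ) - N - 1) (kraw d p (-(N : ℝ) - 2)) *
              Polynomial.eval ((x : ℝ) - N) (kraw d p (-(N : ℝ) - 2)))) *
          Polynomial.eval (x : ℝ) (xkraw2 d n p (N : ℝ)) *
          Polynomial.eval (x : ℝ) (xkraw2 d m p (N : ℝ)) =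
      (if n = m then 1 else 0) * ((N : ℝ) + 1) *
        ((-1 : ℝ) ^ n * poch (-(N : ℝ)) n * (n.factorial : ℝ) * p ^ n * (1 - p) ^ n) /
        ((N : ℝ) + (d : ℝ) + 1 - (n : ℝ)) :=
  krawtchouk_exceptional2_orthogonality_general N p d hPd n m (by lia) (by lia)
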